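/- Let δ > 0 and let A be the 2×2 real matrix A = [[0, 1], [−1, −δ^{1/2}]], and let e₂ = (0, 1)ᵀ. Define U(t) = t^{1/2} · E_{1/2, 3/2}(A t^{1/2}) · e₂ for t ≥ 0, where E_{1/2,3/2} of the matrix B is the convergent series ∑_{k=0}^∞ B^k / Γ(k/2 + 3/2). Then U(0) = 0 and, for every t > 0, each component of U satisfies the Caputo half-order system D^{1/2} U(t) = A U(t) + e₂; that is, componentwise (1/Γ(1/2)) ∫₀ᵗ (t − s)^{−1/2} U_i'(s) ds = (A U(t) + e₂)_i for i = 1, 2. (Exact solution of the Basset problem rewritten as a system.) -/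

import Mathlib

/-!
The Riemann–Liouville kernels `g_a(s) = s^(a-1) / Γ(a)` form a convolution semigroup,
`g_a * g_b = g_(a+b)` (Euler's beta integral), and satisfy `g_(a+1)' = g_a`; the Caputo derivative
of order `α` is `g_(1-α) * f'`, so it turns `g_(αk+α+1)` into `g_(αk+1)`. Since
`s^α E_{α,α+1}(s^α a) = ∑ g_(αk+α+1)(s) a^k`, working term by term gives `∑ g_(αk+1)(t) a^k`: the
`k = 0` term is `g_1 = 1`, and the remaining ones sum to `a` times the original series. The termwise
operations are justified by `Γ(x) = o(Γ(x+α))`, which makes these series converge for coefficients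
of geometric growth.
-/

open Filter MeasureTheory Set
open scoped Matrix

section Gamma

lemma sub_one_rpow_mul_Gamma_le {x a : ℝ} (hx : 1 < x) (ha : 0 < a) :
    (x - 1) ^ a * Real.Gamma x ≤ Real.Gamma (x + a) := by
  have hΓ : ∀ {y : ℝ}, 0 < y → 0 < Real.Gamma y := Real.Gamma_pos_of_pos
  have hpred : 0 < x - 1 := sub_pos.2 hx
  -- By log-convexity, the slope of `log Γ` on `[x, x + a]` dominates the one on `[x - 1, x]`.
  have hslope := Real.convexOn_log_Gamma.slope_mono_adjacent (x := x - 1) (y := x) (z := x + a)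
    (mem_Ioi.2 hpred) (mem_Ioi.2 (by linarith)) (by linarith) (by linarith)
  have hlog : Real.log (Real.Gamma x) - Real.log (Real.Gamma (x - 1)) = Real.log (x - 1) := by
    have hrec : Real.Gamma x = (x - 1) * Real.Gamma (x - 1) := by
      rw [← Real.Gamma_add_one hpred.ne', sub_add_cancel]
    rw [hrec, Real.log_mul hpred.ne' (hΓ hpred).ne', add_sub_cancel_right]
  simp only [Function.comp_apply, sub_sub_cancel, div_one, add_sub_cancel_left, hlog,
    le_div_iff₀ ha] at hslope
  rw [← Real.log_le_log_iff (mul_pos (Real.rpow_pos_of_pos hpred a) (hΓ (by linarith)))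
    (hΓ (by linarith)), Real.log_mul (Real.rpow_pos_of_pos hpred a).ne' (hΓ (by linarith)).ne',
    Real.log_rpow hpred]
  linarith

lemma eventually_const_mul_Gamma_le_Gamma_add (C : ℝ) {a : ℝ} (ha : 0 < a) :
    ∀ᶠ x in atTop, C * Real.Gamma x ≤ Real.Gamma (x + a) := by
  have hpow : Tendsto (fun x : ℝ ↦ (x - 1) ^ a) atTop atTop :=
    (tendsto_rpow_atTop ha).comp (tendsto_atTop_add_const_right _ _ tendsto_id)
  filter_upwards [hpow.eventually_ge_atTop C, eventually_gt_atTop 1] with x hC hx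
  have hΓ : 0 ≤ Real.Gamma x := Real.Gamma_nonneg_of_nonneg (by linarith)
  exact (mul_le_mul_of_nonneg_right hC hΓ).trans (sub_one_rpow_mul_Gamma_le hx ha)

lemma summable_pow_div_Gamma {α : ℝ} (hα : 0 < α) (β M : ℝ) :
    Summable fun k : ℕ ↦ M ^ k / Real.Gamma (α * k + β) := by
  have hlin : Tendsto (fun k : ℕ ↦ α * k + β) atTop atTop :=
    tendsto_atTop_add_const_right _ _ (tendsto_natCast_atTop_atTop.const_mul_atTop hα)
  refine summable_of_ratio_norm_eventually_le (r := 1 / 2) (by norm_num) ?_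
  filter_upwards [hlin.eventually (eventually_const_mul_Gamma_le_Gamma_add (2 * |M|) hα),
    hlin.eventually_gt_atTop 0] with k hratio hpos
  have hΓ : 0 < Real.Gamma (α * k + β) := Real.Gamma_pos_of_pos hpos
  have hΓ' : 0 < Real.Gamma (α * k + β + α) := Real.Gamma_pos_of_pos (by linarith)
  have hsucc : α * (k + 1 : ℕ) + β = α * k + β + α := by push_cast; ring
  rw [hsucc, norm_div, norm_div, norm_pow, norm_pow, Real.norm_of_nonneg hΓ.le,
    Real.norm_of_nonneg hΓ'.le, Real.norm_eq_abs, ← mul_div_assoc, div_le_div_iff₀ hΓ' hΓ]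
  calc |M| ^ (k + 1) * Real.Gamma (α * k + β)
      = 1 / 2 * |M| ^ k * (2 * |M| * Real.Gamma (α * k + β)) := by ring
    _ ≤ 1 / 2 * |M| ^ k * Real.Gamma (α * k + β + α) := by gcongr

end Gamma

/-- The Riemann–Liouville kernel `g_a(s) = s^(a-1) / Γ(a)`; convolving with it is the fractional
integral of order `a`. It is meant for `a > 0` and `s > 0`, junk values occurring elsewhere. -/
noncomputable def rlKernel (a s : ℝ) : ℝ :=
  s ^ (a - 1) / Real.Gamma a

section rlKernel

variable {a b r s t : ℝ}

lemma rlKernel_nonneg (ha : 0 < a) (hs : 0 ≤ s) : 0 ≤ rlKernel a s :=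
  div_nonneg (Real.rpow_nonneg hs _) (Real.Gamma_pos_of_pos ha).le

lemma rlKernel_pos (ha : 0 < a) (hs : 0 < s) : 0 < rlKernel a s :=
  div_pos (Real.rpow_pos_of_pos hs _) (Real.Gamma_pos_of_pos ha)

lemma rlKernel_one_left (s : ℝ) : rlKernel 1 s = 1 := by
  simp [rlKernel]

lemma hasDerivAt_rlKernel_add_one (ha : a ≠ 0) (hs : 0 < s) :
    HasDerivAt (rlKernel (a + 1)) (rlKernel a s) s := by
  convert! (Real.hasDerivAt_rpow_const (p := a) (.inl hs.ne')).div_const (Real.Gamma (a + 1))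
    using 1
  · funext y
    rw [rlKernel, add_sub_cancel_right]
  · rw [rlKernel, Real.Gamma_add_one ha, mul_div_mul_left _ _ ha]

lemma rlKernel_le_mul_rlKernel (ha : 0 < a) (hr : 0 < r) (hrs : r ≤ s) (hst : s ≤ t) :
    rlKernel a s ≤ t / r * rlKernel a t := by
  have hs : 0 < s := hr.trans_le hrs
  have ht : 0 < t := hs.trans_le hst
  have hpow : s ^ (a - 1) ≤ t / r * t ^ (a - 1) :=
    calc s ^ (a - 1) = s ^ a / s := Real.rpow_sub_one hs.ne' a
      _ ≤ t ^ a / r := by gcongr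
      _ = t / r * t ^ (a - 1) := by
        rw [Real.rpow_sub_one ht.ne']
        field_simp
  rw [rlKernel, rlKernel, ← mul_div_assoc]
  exact div_le_div_of_nonneg_right hpow (Real.Gamma_pos_of_pos ha).le

lemma integral_rlKernel_mul_rlKernel (ha : 0 < a) (hb : 0 < b) (ht : 0 < t) :
    ∫ s in (0 : ℝ)..t, rlKernel a (t - s) * rlKernel b s = rlKernel (b + a) t := by
  have hbeta := Complex.betaIntegral_scaled b a ht
  rw [Complex.betaIntegral_eq_Gamma_mul_div _ _ (by simpa using hb) (by simpa using ha)] at hbeta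
  have hcast : ∫ s in (0 : ℝ)..t, ((s ^ (b - 1) * (t - s) ^ (a - 1) : ℝ) : ℂ) =
      ∫ s in (0 : ℝ)..t, (s : ℂ) ^ ((b : ℂ) - 1) * ((t : ℂ) - s) ^ ((a : ℂ) - 1) := by
    refine intervalIntegral.integral_congr fun s hs ↦ ?_
    rw [uIcc_of_le ht.le] at hs
    push_cast [Complex.ofReal_cpow hs.1, Complex.ofReal_cpow (sub_nonneg.2 hs.2)]
    rfl
  have hreal : ∫ s in (0 : ℝ)..t, s ^ (b - 1) * (t - s) ^ (a - 1) =
      t ^ (b + a - 1) * (Real.Gamma b * Real.Gamma a / Real.Gamma (b + a)) := by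
    rw [← Complex.ofReal_inj, ← intervalIntegral.integral_ofReal, hcast, hbeta]
    simp only [← Complex.ofReal_add, Complex.Gamma_ofReal]
    push_cast [Complex.ofReal_cpow ht.le]
    rfl
  have hsplit : ∀ s, rlKernel a (t - s) * rlKernel b s =
      s ^ (b - 1) * (t - s) ^ (a - 1) / (Real.Gamma b * Real.Gamma a) := fun s ↦ by
    simp only [rlKernel]; ring
  have hΓa := (Real.Gamma_pos_of_pos ha).ne'
  have hΓb := (Real.Gamma_pos_of_pos hb).ne'
  simp_rw [hsplit, intervalIntegral.integral_div, hreal, rlKernel]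
  field_simp

lemma integrableOn_rlKernel_mul_rlKernel (ha : 0 < a) (hb : 0 < b) (ht : 0 < t) :
    IntegrableOn (fun s ↦ rlKernel a (t - s) * rlKernel b s) (Ioc 0 t) := by
  refine Integrable.of_integral_ne_zero ?_
  rw [← intervalIntegral.integral_of_le ht.le, integral_rlKernel_mul_rlKernel ha hb ht]
  exact (rlKernel_pos (add_pos hb ha) ht).ne'

lemma rlKernel_mul_add (α β : ℝ) (k : ℕ) (hs : 0 < s) :
    rlKernel (α * k + β) s = s ^ (β - 1) * ((Real.Gamma (α * k + β))⁻¹ * (s ^ α) ^ k) := by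
  rw [rlKernel, add_sub_assoc, Real.rpow_add hs, Real.rpow_mul_natCast hs.le]
  ring

end rlKernel

section Series

variable {E : Type*} [NormedAddCommGroup E] [NormedSpace ℝ E]
  {c : ℕ → E} {C M α β γ s t : ℝ}

lemma summable_norm_rlKernel_smul (hc : ∀ k, ‖c k‖ ≤ C * M ^ k) (hα : 0 < α) (β : ℝ) (hs : 0 < s) :
    Summable fun k : ℕ ↦ ‖rlKernel (α * k + β) s • c k‖ := by
  refine .of_nonneg_of_le (fun k ↦ norm_nonneg _) (fun k ↦ ?_)
    ((summable_pow_div_Gamma hα β (s ^ α * M)).mul_left (s ^ (β - 1) * C)).norm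
  calc ‖rlKernel (α * k + β) s • c k‖
      ≤ ‖rlKernel (α * k + β) s‖ * ‖C * M ^ k‖ := by
        rw [norm_smul]
        gcongr
        exact (hc k).trans (le_abs_self _)
    _ = ‖s ^ (β - 1) * C * ((s ^ α * M) ^ k / Real.Gamma (α * k + β))‖ := by
        rw [← norm_mul, rlKernel_mul_add α β k hs, mul_pow]
        ring_nf

variable [CompleteSpace E]

lemma hasDerivAt_tsum_rlKernel_smul (hc : ∀ k, ‖c k‖ ≤ C * M ^ k) (hα : 0 < α) (hβ : 0 < β)
    (hs : 0 < s) :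
    HasDerivAt (fun y ↦ ∑' k : ℕ, rlKernel (α * k + (β + 1)) y • c k)
      (∑' k : ℕ, rlKernel (α * k + β) s • c k) s := by
  have hpos : ∀ k : ℕ, 0 < α * k + β := fun k ↦ by positivity
  have hmem : s ∈ Ioo (s / 2) (2 * s) := ⟨by linarith, by linarith⟩
  refine hasDerivAt_tsum_of_isPreconnected (t := Ioo (s / 2) (2 * s))
    (g := fun (k : ℕ) y ↦ rlKernel (α * k + (β + 1)) y • c k)
    (g' := fun (k : ℕ) y ↦ rlKernel (α * k + β) y • c k)
    ((summable_norm_rlKernel_smul hc hα β (s := 2 * s) (by positivity)).mul_left (2 * s / (s / 2)))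
    isOpen_Ioo isPreconnected_Ioo (fun k y hy ↦ ?_) (fun k y hy ↦ ?_) hmem
    (summable_norm_rlKernel_smul hc hα (β + 1) hs).of_norm hmem
  · rw [← add_assoc]
    exact (hasDerivAt_rlKernel_add_one (hpos k).ne' (by linarith [hy.1])).smul_const (c k)
  · rw [norm_smul, norm_smul, ← mul_assoc,
      Real.norm_of_nonneg (rlKernel_nonneg (hpos k) (by linarith [hy.1])),
      Real.norm_of_nonneg (rlKernel_nonneg (hpos k) (by positivity))]
    gcongr
    exact rlKernel_le_mul_rlKernel (hpos k) (by positivity) hy.1.le hy.2.le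

lemma hasSum_integral_rlKernel_smul_tsum (hc : ∀ k, ‖c k‖ ≤ C * M ^ k) (hα : 0 < α) (hβ : 0 < β)
    (hγ : 0 < γ) (ht : 0 < t) :
    HasSum (fun k : ℕ ↦ rlKernel (α * k + (β + γ)) t • c k)
      (∫ s in (0 : ℝ)..t, rlKernel γ (t - s) • ∑' k : ℕ, rlKernel (α * k + β) s • c k) := by
  have hpos : ∀ k : ℕ, 0 < α * k + β := fun k ↦ by positivity
  have hconv : ∀ k : ℕ, ∫ s in Ioc 0 t, rlKernel γ (t - s) * rlKernel (α * k + β) s =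
      rlKernel (α * k + (β + γ)) t := fun k ↦ by
    rw [← intervalIntegral.integral_of_le ht.le, integral_rlKernel_mul_rlKernel hγ (hpos k) ht,
      add_assoc]
  have hnorm : ∀ k : ℕ,
      ∫ s in Ioc 0 t, ‖(rlKernel γ (t - s) * rlKernel (α * k + β) s) • c k‖ =
        ‖rlKernel (α * k + (β + γ)) t • c k‖ := fun k ↦ by
    have hnn : 0 ≤ rlKernel (α * k + (β + γ)) t := rlKernel_nonneg (by positivity) ht.le
    rw [norm_smul, Real.norm_of_nonneg hnn, ← hconv, ← integral_mul_const]
    refine setIntegral_congr_fun measurableSet_Ioc fun s hs ↦ ?_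
    rw [norm_smul, Real.norm_of_nonneg (mul_nonneg (rlKernel_nonneg hγ (sub_nonneg.2 hs.2))
      (rlKernel_nonneg (hpos k) hs.1.le))]
  have hsum := hasSum_integral_of_summable_integral_norm
    (fun k : ℕ ↦ (integrableOn_rlKernel_mul_rlKernel hγ (hpos k) ht).smul_const (c k))
    (by simpa only [hnorm] using summable_norm_rlKernel_smul hc hα (β + γ) ht)
  simp only [integral_smul_const, hconv] at hsum
  simp only [mul_smul] at hsum
  rw [intervalIntegral.integral_of_le ht.le]
  convert! hsum using 1
  refine setIntegral_congr_fun measurableSet_Ioc fun s hs ↦ ?_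
  exact ((summable_norm_rlKernel_smul hc hα β hs.1).of_norm.tsum_const_smul _).symm

end Series

/-- The Caputo derivative of order `α ∈ (0, 1)` with base point `0`. -/
noncomputable def caputoDeriv {E : Type*} [NormedAddCommGroup E] [NormedSpace ℝ E]
    (α : ℝ) (f : ℝ → E) (t : ℝ) : E :=
  (1 / Real.Gamma (1 - α)) • ∫ s in (0 : ℝ)..t, (t - s) ^ (-α) • deriv f s

section Caputo

variable {E : Type*} [NormedAddCommGroup E] [NormedSpace ℝ E] {α t : ℝ}

lemma caputoDeriv_eq_integral_rlKernel (α : ℝ) (f : ℝ → E) (t : ℝ) :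
    caputoDeriv α f t = ∫ s in (0 : ℝ)..t, rlKernel (1 - α) (t - s) • deriv f s := by
  rw [caputoDeriv, ← intervalIntegral.integral_smul]
  refine intervalIntegral.integral_congr fun s _ ↦ ?_
  rw [smul_smul, one_div_mul_eq_div, rlKernel, sub_sub_cancel_left]

lemma caputoDeriv_congr {f g : ℝ → E} (hfg : EqOn f g (Ioi 0)) (ht : 0 ≤ t) :
    caputoDeriv α f t = caputoDeriv α g t := by
  have hderiv : EqOn (deriv f) (deriv g) (Ioi 0) := hfg.deriv isOpen_Ioi
  simp only [caputoDeriv, intervalIntegral.integral_of_le ht]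
  congr 1
  exact setIntegral_congr_fun measurableSet_Ioc fun s hs ↦ by simp only [hderiv hs.1]

lemma hasSum_caputoDeriv_tsum_rlKernel_smul [CompleteSpace E] {c : ℕ → E} {C M : ℝ}
    (hc : ∀ k, ‖c k‖ ≤ C * M ^ k) (hα₀ : 0 < α) (hα₁ : α < 1) (ht : 0 < t) :
    HasSum (fun k : ℕ ↦ rlKernel (α * k + 1) t • c k)
      (caputoDeriv α (fun s ↦ ∑' k : ℕ, rlKernel (α * k + (α + 1)) s • c k) t) := by
  have hsum := hasSum_integral_rlKernel_smul_tsum hc hα₀ hα₀ (sub_pos.2 hα₁) ht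
  rw [add_sub_cancel] at hsum
  convert! hsum using 1
  rw [caputoDeriv_eq_integral_rlKernel]
  simp only [intervalIntegral.integral_of_le ht.le]
  refine setIntegral_congr_fun measurableSet_Ioc fun s hs ↦ ?_
  rw [(hasDerivAt_tsum_rlKernel_smul hc hα₀ hα₀ hs.1).deriv]

end Caputo

/-- The two-parametric Mittag-Leffler function `E_{α,β}` with argument in a real algebra. -/
noncomputable def mittagLeffler {𝔸 : Type*} [Ring 𝔸] [Algebra ℝ 𝔸] [TopologicalSpace 𝔸]
    (α β : ℝ) (x : 𝔸) : 𝔸 :=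
  ∑' k : ℕ, (Real.Gamma (α * k + β))⁻¹ • x ^ k

section MittagLeffler

variable {𝔸 E : Type*} [NormedRing 𝔸] [NormOneClass 𝔸] [NormedAlgebra ℝ 𝔸] [CompleteSpace 𝔸]
  [NormedAddCommGroup E] [NormedSpace ℝ E] {α s t : ℝ}

lemma hasSum_rlKernel_smul_pow (hα : 0 < α) (β : ℝ) (a : 𝔸) (hs : 0 < s) :
    HasSum (fun k : ℕ ↦ rlKernel (α * k + β) s • a ^ k)
      (s ^ (β - 1) • mittagLeffler α β (s ^ α • a)) := by
  have hgrowth : ∀ k : ℕ, ‖a ^ k‖ ≤ 1 * ‖a‖ ^ k := fun k ↦ by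
    simpa only [one_mul] using norm_pow_le a k
  have hterm : ∀ k : ℕ, s ^ (β - 1) • (Real.Gamma (α * k + β))⁻¹ • (s ^ α • a) ^ k =
      rlKernel (α * k + β) s • a ^ k := fun k ↦ by
    rw [smul_pow, smul_smul, smul_smul, rlKernel_mul_add α β k hs, mul_assoc]
  rw [mittagLeffler, ← tsum_const_smul'', tsum_congr hterm]
  exact (summable_norm_rlKernel_smul hgrowth hα β hs).of_norm.hasSum

theorem caputoDeriv_map_rpow_smul_mittagLeffler [CompleteSpace E] (hα₀ : 0 < α) (hα₁ : α < 1)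
    (a : 𝔸) (φ : 𝔸 →L[ℝ] E) (ht : 0 < t) :
    caputoDeriv α (fun s ↦ φ (s ^ α • mittagLeffler α (α + 1) (s ^ α • a))) t =
      φ (a * (t ^ α • mittagLeffler α (α + 1) (t ^ α • a)) + 1) := by
  have hseries : ∀ {s}, 0 < s → HasSum (fun k : ℕ ↦ rlKernel (α * k + (α + 1)) s • a ^ k)
      (s ^ α • mittagLeffler α (α + 1) (s ^ α • a)) := fun hs ↦ by
    simpa only [add_sub_cancel_right] using hasSum_rlKernel_smul_pow hα₀ (α + 1) a hs
  have hgrowth : ∀ k : ℕ, ‖φ (a ^ k)‖ ≤ ‖φ‖ * ‖a‖ ^ k := fun k ↦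
    φ.le_opNorm_of_le (norm_pow_le a k)
  have hlhs := hasSum_caputoDeriv_tsum_rlKernel_smul hgrowth hα₀ hα₁ ht
  rw [← caputoDeriv_congr (f := fun s ↦ φ (s ^ α • mittagLeffler α (α + 1) (s ^ α • a)))
    (fun s hs ↦ by simpa using ((hseries hs).mapL φ).tsum_eq.symm) ht.le] at hlhs
  have hrhs : HasSum (fun k : ℕ ↦ rlKernel (α * k + 1) t • a ^ k)
      (a * (t ^ α • mittagLeffler α (α + 1) (t ^ α • a)) + 1) := by
    refine (hasSum_nat_add_iff' 1).1 ?_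
    convert! (hseries ht).mul_left a using 1
    · funext k
      rw [mul_smul_comm, ← pow_succ']
      push_cast
      ring_nf
    · simp [rlKernel_one_left]
  exact hlhs.unique (by simpa using hrhs.mapL φ)

end MittagLeffler

theorem basset_system_exact_solution_general {n : Type*} [Fintype n] [DecidableEq n]
    {α : ℝ} (hα₀ : 0 < α) (hα₁ : α < 1) (A : Matrix n n ℝ) (v : n → ℝ) (U : ℝ → n → ℝ)
    (hU : ∀ t, 0 ≤ t → U t = t ^ α • mittagLeffler α (α + 1) (t ^ α • A) *ᵥ v) :
    U 0 = 0 ∧ ∀ t, 0 < t → ∀ i, caputoDeriv α (fun s ↦ U s i) t = (A *ᵥ U t + v) i := by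
  refine ⟨by simp [hU 0 le_rfl, Real.zero_rpow hα₀.ne'], fun t ht i ↦ ?_⟩
  have : Nonempty n := ⟨i⟩
  let evalAt : Matrix n n ℝ →L[ℝ] ℝ := LinearMap.toContinuousLinearMap
    (LinearMap.proj i ∘ₗ (Matrix.mulVecBilin ℝ ℝ).flip v)
  have hU' : ∀ {s}, 0 ≤ s →
      U s i = evalAt (s ^ α • mittagLeffler α (α + 1) (s ^ α • A)) := fun hs ↦ by
    simp [evalAt, hU _ hs]
  calc caputoDeriv α (fun s ↦ U s i) t
      = caputoDeriv α (fun s ↦ evalAt (s ^ α • mittagLeffler α (α + 1) (s ^ α • A))) t :=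
        caputoDeriv_congr (fun s hs ↦ hU' (le_of_lt hs)) ht.le
    _ = evalAt (A * (t ^ α • mittagLeffler α (α + 1) (t ^ α • A)) + 1) := by
        open scoped Matrix.Norms.Operator in
        exact caputoDeriv_map_rpow_smul_mittagLeffler hα₀ hα₁ A evalAt ht
    _ = (A *ᵥ U t + v) i := by
        simp [evalAt, hU t ht.le, Matrix.mulVec_smul]

/-- Exact solution of the Basset problem rewritten as a half-order system:
`U(t) = t^{1/2} E_{1/2,3/2}(A t^{1/2}) e₂` satisfies `U(0) = 0` and, componentwise,
`D^{1/2} U(t) = A U(t) + e₂` for `t > 0`. -/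
theorem basset_system_exact_solution
    (δ : ℝ) (hδ : 0 < δ)
    (A : Matrix (Fin 2) (Fin 2) ℝ) (hA : A = !![0, 1; -1, -Real.sqrt δ])
    (e₂ : Fin 2 → ℝ) (he : e₂ = ![0, 1])
    (U : ℝ → Fin 2 → ℝ)
    (hU : ∀ t : ℝ, U t = t ^ ((1 : ℝ) / 2) •
        (∑' k : ℕ, (Real.Gamma ((k : ℝ) / 2 + 3 / 2))⁻¹ •
          (t ^ ((1 : ℝ) / 2) • A) ^ k).mulVec e₂) :
    U 0 = 0 ∧
      ∀ t : ℝ, 0 < t → ∀ i : Fin 2,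
        (1 / Real.Gamma (1 / 2)) *
            (∫ s in (0 : ℝ)..t, (t - s) ^ (-(1 / 2) : ℝ) * deriv (fun s => U s i) s)
          = (A.mulVec (U t) + e₂) i := by
  have hhalf : (1 : ℝ) - 1 / 2 = 1 / 2 ∧ (1 : ℝ) / 2 + 1 = 3 / 2 := by norm_num
  have hU' : ∀ t, 0 ≤ t →
      U t = t ^ (1 / 2 : ℝ) • mittagLeffler (1 / 2) (1 / 2 + 1) (t ^ (1 / 2 : ℝ) • A) *ᵥ e₂ :=
    fun t _ ↦ by simpa only [mittagLeffler, hhalf, one_div_mul_eq_div] using hU t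
  simpa only [caputoDeriv, smul_eq_mul, hhalf] using
    basset_system_exact_solution_general one_half_pos one_half_lt_one A e₂ U hU'
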